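/- arXiv:2306.00321 — 2 statements merged into one kernel-verified Lean document; each statement's English description precedes it below -/
import Mathlib

section
/- Let μ be a policy in a finite MDP whose discounted occupancy has support Ω ⊆ S × S' pairs, and suppose the heuristic satisfies h(s) = V^μ(s) for all states s in the state-support of μ. Let λ(s,s') be arbitrary in [0,1] on Ω and 0 outside Ω. Then the value of μ in the reshaped MDP equals its value in the original MDP: Ṽ^μ(s) = V^μ(s) for every state s in the support of μ. -/
/-- Lemma `exntend-thm1` of HUBL.  If the heuristic equals the
behavior-policy value `V^μ` on the (state) support `Ω` of `μ`, the blending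
function `λ(s,s') ∈ [0,1]` vanishes whenever `s ∉ Ω` or `s' ∉ Ω`, and the
support is closed under transitions of `μ`, then the value `Ṽ^μ` of `μ` in the
reshaped MDP coincides with `V^μ` on `Ω`. -/
theorem hubl_behavior_value_invariant
    {S A : Type*} [Fintype S] [Fintype A]
    (P : S → A → S → ℝ) (r : S → A → ℝ)
    (γ : ℝ) (hγ0 : 0 ≤ γ) (hγ1 : γ < 1)
    (μ : S → A → ℝ) (hμnn : ∀ s a, 0 ≤ μ s a) (hμsum : ∀ s, ∑ a, μ s a = 1)
    (hPnn : ∀ s a s', 0 ≤ P s a s') (hPsum : ∀ s a, ∑ s', P s a s' = 1)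
    (Ω : Set S)
    -- the support is closed under transitions of μ
    (hclosed : ∀ s ∈ Ω, ∀ a, 0 < μ s a → ∀ s', 0 < P s a s' → s' ∈ Ω)
    (lam : S → S → ℝ) (hlam : ∀ s s', lam s s' ∈ Set.Icc (0 : ℝ) 1)
    (hlam0 : ∀ s s', s ∉ Ω ∨ s' ∉ Ω → lam s s' = 0)
    (h : S → ℝ)
    (Vμ Vtμ : S → ℝ)
    (hVμ : ∀ s, Vμ s = ∑ a, μ s a * (r s a + γ * ∑ s', P s a s' * Vμ s'))
    (hh : ∀ s ∈ Ω, h s = Vμ s)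
    (hVtμ : ∀ s, Vtμ s = ∑ a, μ s a * ∑ s', P s a s' *
      (r s a + γ * lam s s' * h s' + γ * (1 - lam s s') * Vtμ s')) :
    ∀ s ∈ Ω, Vtμ s = Vμ s := by
  have hD : ∀ s, Vtμ s - Vμ s = ∑ a, μ s a * ∑ s', P s a s' *
      (γ * (1 - lam s s') * (Vtμ s' - Vμ s')) := by
    intro s
    have e : Vμ s = ∑ a, μ s a * ∑ s', P s a s' * (r s a + γ * Vμ s') := by
      rw [hVμ s]
      refine Finset.sum_congr rfl fun a _ => ?_
      congr 1
      simp only [mul_add, Finset.sum_add_distrib, ← Finset.sum_mul, hPsum, one_mul,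
        Finset.mul_sum]
      congr 1
      exact Finset.sum_congr rfl fun s' _ => by ring
    rw [hVtμ s, e, ← Finset.sum_sub_distrib]
    refine Finset.sum_congr rfl fun a _ => ?_
    rw [← mul_sub, ← Finset.sum_sub_distrib]
    congr 1
    refine Finset.sum_congr rfl fun s' _ => ?_
    have hl : lam s s' * h s' = lam s s' * Vμ s' := by
      by_cases hs : s' ∈ Ω
      · rw [hh s' hs]
      · rw [hlam0 s s' (Or.inr hs)]; simp
    linear_combination (P s a s' * γ) * hl
  intro s _
  haveI : Nonempty S := ⟨s⟩
  obtain ⟨s0, h0⟩ := Finite.exists_max (fun s => |Vtμ s - Vμ s|)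
  have key : |Vtμ s0 - Vμ s0| ≤ γ * |Vtμ s0 - Vμ s0| := by
    calc |Vtμ s0 - Vμ s0|
        = |∑ a, μ s0 a * ∑ s', P s0 a s' *
            (γ * (1 - lam s0 s') * (Vtμ s' - Vμ s'))| := by rw [← hD s0]
      _ ≤ ∑ a, μ s0 a * ∑ s', P s0 a s' * (γ * |Vtμ s0 - Vμ s0|) := by
          refine (Finset.abs_sum_le_sum_abs _ _).trans (Finset.sum_le_sum fun a _ => ?_)
          rw [abs_mul, abs_of_nonneg (hμnn s0 a)]
          refine mul_le_mul_of_nonneg_left ?_ (hμnn s0 a)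
          refine (Finset.abs_sum_le_sum_abs _ _).trans (Finset.sum_le_sum fun s' _ => ?_)
          rw [abs_mul, abs_of_nonneg (hPnn s0 a s')]
          refine mul_le_mul_of_nonneg_left ?_ (hPnn s0 a s')
          obtain ⟨l0, l1⟩ := hlam s0 s'
          rw [abs_mul, abs_mul, abs_of_nonneg hγ0, abs_of_nonneg (sub_nonneg.2 l1), mul_assoc]
          refine mul_le_mul_of_nonneg_left ?_ hγ0
          have := h0 s'
          have := abs_nonneg (Vtμ s' - Vμ s')
          nlinarith
      _ = γ * |Vtμ s0 - Vμ s0| := by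
          simp only [← Finset.sum_mul, hPsum, hμsum, one_mul]
  have hs := h0 s
  have h1 := abs_nonneg (Vtμ s0 - Vμ s0)
  have h2 : |Vtμ s0 - Vμ s0| = 0 := by nlinarith
  have h3 : |Vtμ s - Vμ s| = 0 := le_antisymm (h2 ▸ hs) (abs_nonneg _)
  exact sub_eq_zero.1 (abs_eq_zero.1 h3)
end

section
/- In a finite MDP with constant blending factor λ ∈ [0,1], the gap between the original optimal value and the reshaped value of π* admits the series representation V*(s) − Ṽ^{π*}(s) = E_{trajectories of π* from s}[ Σ_{t=1}^∞ λ (1−λ)^{t−1} γ^t (V*(s_t) − h(s_t)) ]. -/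
/-- Lemma `v-star-tv` of HUBL.  With a constant blending factor
`λ ∈ [0,1]`, the gap between the original optimal value and the reshaped value
of `π*` has the series representation
`V*(s) − Ṽ^{π*}(s) = E_{π*, s}[Σ_{t≥1} λ(1−λ)^{t−1} γ^t (V*(s_t) − h(s_t))]`,
where `ρ t` is the time-`t` state distribution of `π*` started at `s`. -/
theorem hubl_value_gap_series
    {S A : Type*} [Fintype S] [Fintype A] [DecidableEq S]
    (P : S → A → S → ℝ) (r : S → A → ℝ)
    (γ : ℝ) (hγ0 : 0 ≤ γ) (hγ1 : γ < 1)
    (lam : ℝ) (hlam : lam ∈ Set.Icc (0 : ℝ) 1)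
    (πstar : S → A → ℝ) (hπnn : ∀ s a, 0 ≤ πstar s a)
    (hπsum : ∀ s, ∑ a, πstar s a = 1)
    (hPnn : ∀ s a s', 0 ≤ P s a s') (hPsum : ∀ s a, ∑ s', P s a s' = 1)
    (h Vstar Vtstar : S → ℝ)
    (hVstar : ∀ s, Vstar s = ∑ a, πstar s a *
      (r s a + γ * ∑ s', P s a s' * Vstar s'))
    (hVtstar : ∀ s, Vtstar s = ∑ a, πstar s a * ∑ s', P s a s' *
      (r s a + γ * lam * h s' + γ * (1 - lam) * Vtstar s'))
    (s : S) (ρ : ℕ → S → ℝ)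
    (hρ0 : ∀ s', ρ 0 s' = if s' = s then 1 else 0)
    (hρ : ∀ t s', ρ (t + 1) s' = ∑ s₁, ∑ a, ρ t s₁ * πstar s₁ a * P s₁ a s') :
    Vstar s - Vtstar s =
      ∑' t : ℕ, lam * (1 - lam) ^ t * γ ^ (t + 1) *
        ∑ s', ρ (t + 1) s' * (Vstar s' - h s') := by
  obtain ⟨hl0, hl1⟩ := hlam
  -- one-step expectation identity for the state distributions
  have hE : ∀ (t : ℕ) (f : S → ℝ), ∑ s', ρ (t + 1) s' * f s' =
      ∑ x, ρ t x * ∑ a, πstar x a * ∑ s', P x a s' * f s' := by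
    intro t f
    simp only [hρ, Finset.sum_mul, Finset.mul_sum]
    rw [Finset.sum_comm]
    refine Finset.sum_congr rfl fun x _ => ?_
    rw [Finset.sum_comm]
    refine Finset.sum_congr rfl fun a _ => ?_
    refine Finset.sum_congr rfl fun s' _ => ?_
    ring
  have hnn : ∀ t x, 0 ≤ ρ t x := by
    intro t
    induction t with
    | zero => intro x; rw [hρ0]; split_ifs <;> norm_num
    | succ t ih =>
      intro x
      rw [hρ]
      exact Finset.sum_nonneg fun y _ => Finset.sum_nonneg fun a _ =>
        mul_nonneg (mul_nonneg (ih y) (hπnn y a)) (hPnn y a x)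
  have hone : ∀ t, ∑ x, ρ t x = 1 := by
    intro t
    induction t with
    | zero => simp [hρ0]
    | succ t ih =>
      have := hE t (fun _ => 1)
      simpa [hPsum, hπsum, ih] using this
  have hle : ∀ t x, ρ t x ≤ 1 := fun t x => by
    rw [← hone t]
    exact Finset.single_le_sum (fun y _ => hnn t y) (Finset.mem_univ x)
  -- Bellman equation of the gap
  have hD : ∀ x, Vstar x - Vtstar x = ∑ a, πstar x a * ∑ s', P x a s' *
      (γ * (1 - lam) * (Vstar s' - Vtstar s') + γ * lam * (Vstar s' - h s')) := by
    intro x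
    rw [hVstar x, hVtstar x, ← Finset.sum_sub_distrib]
    refine Finset.sum_congr rfl fun a _ => ?_
    rw [← mul_sub]
    congr 1
    have h1 : r x a = ∑ s', P x a s' * r x a := by
      rw [← Finset.sum_mul, hPsum, one_mul]
    rw [h1, Finset.mul_sum, ← Finset.sum_add_distrib, ← h1, ← Finset.sum_sub_distrib]
    refine Finset.sum_congr rfl fun s' _ => ?_
    ring
  have hb0 : 0 ≤ γ * (1 - lam) := mul_nonneg hγ0 (by linarith)
  have hb1 : γ * (1 - lam) < 1 := by nlinarith
  set b := γ * (1 - lam) with hb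
  set u : ℕ → ℝ := fun t => b ^ t * ∑ x, ρ t x * (Vstar x - Vtstar x) with hu
  have hsum : Summable u := by
    refine Summable.of_norm_bounded
      ((summable_geometric_of_lt_one hb0 hb1).mul_right (∑ x, |Vstar x - Vtstar x|)) ?_
    intro t
    rw [hu, Real.norm_eq_abs, abs_mul, abs_of_nonneg (pow_nonneg hb0 t)]
    refine mul_le_mul_of_nonneg_left ?_ (pow_nonneg hb0 t)
    refine (Finset.abs_sum_le_sum_abs _ _).trans (Finset.sum_le_sum fun x _ => ?_)
    rw [abs_mul, abs_of_nonneg (hnn t x)]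
    exact mul_le_of_le_one_left (abs_nonneg _) (hle t x)
  have hterm : ∀ t, lam * (1 - lam) ^ t * γ ^ (t + 1) *
      ∑ s', ρ (t + 1) s' * (Vstar s' - h s') = u t - u (t + 1) := by
    intro t
    have h1 : ∑ x, ρ t x * (Vstar x - Vtstar x) =
        b * ∑ x, ρ (t + 1) x * (Vstar x - Vtstar x) +
        γ * lam * ∑ x, ρ (t + 1) x * (Vstar x - h x) := by
      rw [Finset.mul_sum, Finset.mul_sum, ← Finset.sum_add_distrib]
      have h2 := hE t (fun s' => b * (Vstar s' - Vtstar s') + γ * lam * (Vstar s' - h s'))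
      simp only [← hD] at h2
      rw [← h2]
      refine Finset.sum_congr rfl fun x _ => ?_
      ring
    simp only [hu]
    have h3 : b ^ t = γ ^ t * (1 - lam) ^ t := by rw [hb, mul_pow]
    rw [h1, pow_succ b t, h3]
    ring
  have hsum1 : Summable fun t => u (t + 1) := (summable_nat_add_iff 1).2 hsum
  rw [tsum_congr hterm, hsum.tsum_sub hsum1, hsum.tsum_eq_zero_add]
  simp [hu, hρ0]
end
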